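/- Let I be a nonempty set of non-negative integers and let S ⊆ ℕ^(I) be a gap absorbing monoid. Then for every s ∈ S, the set of lengths L(s) is an interval of integers. -/

import Mathlib

open Pointwise

section Defs

variable {M : Type*} [AddCommMonoid M] [PartialOrder M]

/-- `S* = S \ {0}`. -/
def Sstar (S : AddSubmonoid M) : Set M := (S : Set M) \ {0}

/-- The set of gaps `H(S)`, the complement of `S`. -/
def Gaps (S : AddSubmonoid M) : Set M := (S : Set M)ᶜ

/-- The set of atoms `A(S) = S* \ (S* + S*)`. -/
def Atoms (S : AddSubmonoid M) : Set M := Sstar S \ (Sstar S + Sstar S)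

/-- `S` is an ideal extension: `S* + M ⊆ S*`. -/
def IsIdealExtension (S : AddSubmonoid M) : Prop :=
  ∀ s ∈ Sstar S, ∀ x : M, s + x ∈ Sstar S

/-- `S` is gap absorbing. -/
def IsGapAbsorbing (S : AddSubmonoid M) : Prop :=
  Gaps S + Gaps S ⊆ Gaps S ∪ Atoms S ∪ (Atoms S + Atoms S) ∧
  Gaps S + Atoms S ⊆ Atoms S ∪ (Atoms S + Atoms S)

/-- `M(S)`: minimal elements of `S*` with respect to `≤`. -/
def Mins (S : AddSubmonoid M) : Set M :=
  {m | m ∈ Sstar S ∧ ∀ t ∈ Sstar S, t ≤ m → t = m}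

/-- `n`-fold sumset, with `0`-fold sumset `{0}`. -/
def nfold : ℕ → Set M → Set M
  | 0, _ => {0}
  | n + 1, X => nfold n X + X

/-- The set of lengths `L(s) = {n : s ∈ nA(S)}`. -/
def Lset (S : AddSubmonoid M) (s : M) : Set ℕ := {n | s ∈ nfold n (Atoms S)}

/-- The minimal factorization length `ℓ(s)`. -/
noncomputable def minLen (S : AddSubmonoid M) (s : M) : ℕ := sInf (Lset S s)

/-- `X` is closed under intervals. -/
def ClosedUnderIntervals (X : Set M) : Prop :=
  ∀ u ∈ X, ∀ v ∈ X, u ≤ v → Set.Icc u v ⊆ X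

/-- `a ≤_S b`, i.e. `b - a ∈ S`. -/
def dvdS (S : AddSubmonoid M) (a b : M) : Prop := ∃ t ∈ S, a + t = b

end Defs

/-!
Call an element of the ambient monoid indecomposable if it is not a sum of two elements of `S*`.
Gap absorption says that a sum of two indecomposables which lies in `S*` is a sum of at most two
atoms, so an element of `S*` is a sum of `n` indecomposables exactly when it has a factorization of
length at most `n`. Since `S*` absorbs addition of arbitrary elements and the ambient monoid has the
refinement property, sums of `n` indecomposables are closed under passing to summands. Hence if `s`
has a factorization of length `j < n` and one of length `n + 1`, removing an atom from the latter
leaves an element with factorizations of lengths `n` and at most `j`, and induction on `n` produces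
a factorization of `s` of length `n`.
-/

/-- The Riesz refinement property: any two decompositions of an element into two summands have a
common refinement. -/
class RefinementAddMonoid (M : Type*) [AddCommMonoid M] : Prop where
  exists_refinement : ∀ {a b c d : M}, a + b = c + d →
    ∃ w x y z, w + x = a ∧ y + z = b ∧ w + y = c ∧ x + z = d

section Lattice

variable {M : Type*} [AddCommMonoid M] [SemilatticeInf M] [CanonicallyOrderedAdd M]
  [IsOrderedCancelAddMonoid M]

theorem le_of_le_add_left_of_inf_eq_zero {a b c : M} (hab : a ⊓ b = 0) (h : a ≤ b + c) :
    a ≤ c := by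
  obtain ⟨e, he⟩ := exists_add_of_le (le_inf (le_add_self : c ≤ a + c) (le_add_self : c ≤ b + c))
  have he_le : e ≤ a ⊓ b := by
    refine le_inf ?_ ?_ <;> refine le_of_add_le_add_left (a := c) ?_ <;> rw [← he, add_comm c]
    exacts [inf_le_left, inf_le_right]
  have he_zero : e = 0 := nonpos_iff_eq_zero.mp (hab ▸ he_le)
  calc
    a ≤ (a + c) ⊓ (b + c) := le_inf le_self_add h
    _ = c := by rw [he, he_zero, add_zero]

theorem exists_add_eq_and_inf_eq_zero (a c : M) :
    ∃ x y, a ⊓ c + x = a ∧ a ⊓ c + y = c ∧ x ⊓ y = 0 := by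
  obtain ⟨x, hx⟩ := exists_add_of_le (inf_le_left : a ⊓ c ≤ a)
  obtain ⟨y, hy⟩ := exists_add_of_le (inf_le_right : a ⊓ c ≤ c)
  refine ⟨x, y, hx.symm, hy.symm, nonpos_iff_eq_zero.mp (le_of_add_le_add_left (a := a ⊓ c) ?_)⟩
  rw [add_zero]
  refine le_inf ?_ ?_
  · exact (add_le_add_right inf_le_left _).trans_eq hx.symm
  · exact (add_le_add_right inf_le_right _).trans_eq hy.symm

instance refinementAddMonoid_of_semilatticeInf : RefinementAddMonoid M where
  exists_refinement {a b c d} h := by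
    obtain ⟨x, y, hx, hy, hxy⟩ := exists_add_eq_and_inf_eq_zero a c
    have hxyd : x + b = y + d := by
      rw [← add_right_inj (a ⊓ c), ← add_assoc, ← add_assoc, hx, hy, h]
    have hyb : y ≤ b :=
      le_of_le_add_left_of_inf_eq_zero (inf_comm x y ▸ hxy) (hxyd ▸ le_self_add)
    obtain ⟨z, rfl⟩ := exists_add_of_le hyb
    refine ⟨a ⊓ c, x, y, z, hx, rfl, hy, ?_⟩
    rwa [add_left_comm, add_right_inj] at hxyd

end Lattice

theorem mem_nsmul_of_add_mem_nsmul {M : Type*} [AddCommMonoid M] [RefinementAddMonoid M]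
    {X : Set M} (hX : ∀ x y, x + y ∈ X → x ∈ X) {n : ℕ} (hn : n ≠ 0) {x y : M}
    (h : x + y ∈ n • X) : x ∈ n • X := by
  induction n, Nat.one_le_iff_ne_zero.mpr hn using Nat.le_induction generalizing x y with
  | base =>
    rw [one_nsmul] at h ⊢
    exact hX x y h
  | succ n one_le_n ih =>
    rw [succ_nsmul] at h ⊢
    obtain ⟨u, hu, v, hv, huv⟩ := Set.mem_add.mp h
    obtain ⟨p, q, r, t, rfl, rfl, rfl, rfl⟩ := RefinementAddMonoid.exists_refinement huv.symm
    exact Set.add_mem_add (ih (Nat.one_le_iff_ne_zero.mp one_le_n) hu) (hX q t hv)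

section Submonoid

variable {M : Type*} [AddCommMonoid M] {S : AddSubmonoid M}

theorem nfold_eq_nsmul (n : ℕ) (X : Set M) : nfold n X = n • X := by
  induction n with
  | zero => exact (zero_nsmul X).symm
  | succ n ih => rw [nfold, ih, succ_nsmul]

theorem mem_lset_iff {s : M} {n : ℕ} : n ∈ Lset S s ↔ s ∈ n • Atoms S := by
  rw [← nfold_eq_nsmul]
  rfl

theorem exists_mem_atoms_add_eq [PartialOrder M] [CanonicallyOrderedAdd M]
    [IsOrderedCancelAddMonoid M] [WellFoundedLT M] {s : M} (hs : s ∈ Sstar S) :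
    ∃ a ∈ Atoms S, ∃ t ∈ S, a + t = s := by
  induction s using WellFoundedLT.induction with
  | ind s ih =>
    by_cases hsum : s ∈ Sstar S + Sstar S
    · obtain ⟨p, hp, q, hq, rfl⟩ := Set.mem_add.mp hsum
      have hlt : p < p + q := lt_add_of_pos_right p (pos_iff_ne_zero.mpr hq.2)
      obtain ⟨a, ha, t, ht, rfl⟩ := ih p hlt hp
      exact ⟨a, ha, t + q, S.add_mem ht hq.1, (add_assoc a t q).symm⟩
    · exact ⟨s, ⟨hs, hsum⟩, 0, S.zero_mem, add_zero s⟩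

theorem add_mem_sstar [Subsingleton (AddUnits M)] {x y : M} (hx : x ∈ Sstar S) (hy : y ∈ S) :
    x + y ∈ Sstar S :=
  ⟨S.add_mem hx.1 hy, fun h => hx.2 (add_eq_zero.mp h).1⟩

theorem IsGapAbsorbing.isIdealExtension [Subsingleton (AddUnits M)] (hS : IsGapAbsorbing S)
    (hatom : ∀ s ∈ Sstar S, ∃ a ∈ Atoms S, ∃ t ∈ S, a + t = s) : IsIdealExtension S := by
  intro s hs x
  by_cases hx : x ∈ S
  · exact add_mem_sstar hs hx
  obtain ⟨a, ha, t, ht, rfl⟩ := hatom s hs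
  have hxa : x + a ∈ Sstar S := by
    rcases hS.2 (Set.add_mem_add hx ha) with h | h
    · exact h.1
    · obtain ⟨b, hb, c, hc, hbc⟩ := Set.mem_add.mp h
      exact hbc ▸ add_mem_sstar hb.1 hc.1.1
  rw [add_right_comm, add_comm a]
  exact add_mem_sstar hxa ht

/-- The elements of the ambient monoid that are not a sum of two elements of `S*`. When `S` is an
ideal extension, these are the atoms of `S` together with all elements outside `S*`. -/
def Indecomposables (S : AddSubmonoid M) : Set M := (Sstar S + Sstar S)ᶜ

theorem atoms_subset_indecomposables : Atoms S ⊆ Indecomposables S := fun _ ha => ha.2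

namespace IsIdealExtension

theorem nsmul_atoms_subset_sstar (hideal : IsIdealExtension S) {n : ℕ} (hn : n ≠ 0) :
    n • Atoms S ⊆ Sstar S := by
  obtain ⟨k, rfl⟩ := Nat.exists_eq_succ_of_ne_zero hn
  rw [succ_nsmul']
  rintro _ ⟨a, ha, x, -, rfl⟩
  exact hideal a ha.1 x

theorem mem_indecomposables_of_add_mem (hideal : IsIdealExtension S) (x y : M)
    (h : x + y ∈ Indecomposables S) : x ∈ Indecomposables S := by
  rintro ⟨p, hp, q, hq, rfl⟩
  exact h ⟨p, hp, q + y, hideal q hq y, (add_assoc p q y).symm⟩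

theorem mem_indecomposables_of_notMem_sstar (hideal : IsIdealExtension S) {x : M}
    (hx : x ∉ Sstar S) : x ∈ Indecomposables S := by
  rintro ⟨p, hp, q, -, rfl⟩
  exact hx (hideal p hp q)

end IsIdealExtension

namespace IsGapAbsorbing

theorem add_mem_atoms_or_mem_two_nsmul (hS : IsGapAbsorbing S) {x y : M}
    (hx : x ∈ Indecomposables S) (hy : y ∈ Indecomposables S) (hxy : x + y ∈ Sstar S) :
    x + y ∈ Atoms S ∨ x + y ∈ 2 • Atoms S := by
  rw [two_nsmul]
  rcases eq_or_ne x 0 with rfl | hx0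
  · rw [zero_add] at hxy ⊢
    exact .inl ⟨hxy, hy⟩
  rcases eq_or_ne y 0 with rfl | hy0
  · rw [add_zero] at hxy ⊢
    exact .inl ⟨hxy, hx⟩
  by_cases hxS : x ∈ S <;> by_cases hyS : y ∈ S
  · exact .inr (Set.add_mem_add ⟨⟨hxS, hx0⟩, hx⟩ ⟨⟨hyS, hy0⟩, hy⟩)
  · rw [add_comm]
    exact hS.2 (Set.add_mem_add hyS ⟨⟨hxS, hx0⟩, hx⟩)
  · exact hS.2 (Set.add_mem_add hxS ⟨⟨hyS, hy0⟩, hy⟩)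
  · rcases hS.1 (Set.add_mem_add hxS hyS) with (hgap | hatom) | hsum
    exacts [absurd hxy.1 hgap, .inl hatom, .inr hsum]

theorem exists_le_mem_nsmul_atoms_of_mem_nsmul_indecomposables (hS : IsGapAbsorbing S)
    (hideal : IsIdealExtension S) {n : ℕ} {x : M} (hx : x ∈ n • Indecomposables S)
    (hxS : x ∈ Sstar S) : ∃ m ≤ n, x ∈ m • Atoms S := by
  induction n generalizing x with
  | zero => exact absurd hx hxS.2
  | succ n ih =>
    rw [succ_nsmul] at hx
    obtain ⟨y, hy, t, ht, rfl⟩ := Set.mem_add.mp hx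
    by_cases hyS : y ∈ Sstar S
    · obtain ⟨_ | m, hmn, hym⟩ := ih hy hyS
      · exact absurd hym hyS.2
      rw [succ_nsmul] at hym
      obtain ⟨z, hz, a, ha, rfl⟩ := Set.mem_add.mp hym
      rw [add_assoc]
      rcases hS.add_mem_atoms_or_mem_two_nsmul ha.2 ht (hideal a ha.1 t) with hat | hat
      · exact ⟨m + 1, by omega, succ_nsmul (Atoms S) m ▸ Set.add_mem_add hz hat⟩
      · exact ⟨m + 2, by omega, add_nsmul (Atoms S) m 2 ▸ Set.add_mem_add hz hat⟩
    · rcases Nat.eq_zero_or_pos n with rfl | hn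
      · obtain rfl : y = 0 := hy
        rw [zero_add t] at hxS ⊢
        refine ⟨1, le_rfl, ?_⟩
        rw [one_nsmul]
        exact ⟨hxS, ht⟩
      · have hyI := hideal.mem_indecomposables_of_notMem_sstar hyS
        rcases hS.add_mem_atoms_or_mem_two_nsmul hyI ht hxS with hyt | hyt
        · exact ⟨1, by omega, (one_nsmul (Atoms S)).symm ▸ hyt⟩
        · exact ⟨2, by omega, hyt⟩

variable [RefinementAddMonoid M]

theorem mem_nsmul_atoms_of_mem_succ_nsmul (hS : IsGapAbsorbing S) (hideal : IsIdealExtension S)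
    {j n : ℕ} {x : M} (hj : x ∈ j • Atoms S) (hn : x ∈ (n + 1) • Atoms S) (hjn : j ≤ n) :
    x ∈ n • Atoms S := by
  induction n generalizing j x with
  | zero => rwa [← Nat.le_zero.mp hjn]
  | succ n ih =>
    rcases hjn.eq_or_lt with rfl | hjn
    · exact hj
    have hj0 : j ≠ 0 := by
      rintro rfl
      exact (hideal.nsmul_atoms_subset_sstar (Nat.succ_ne_zero _) hn).2 hj
    rw [succ_nsmul] at hn
    obtain ⟨y, hy, b, hb, rfl⟩ := Set.mem_add.mp hn
    have hyj : y ∈ j • Indecomposables S :=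
      mem_nsmul_of_add_mem_nsmul hideal.mem_indecomposables_of_add_mem hj0
        (Set.nsmul_subset_nsmul_left atoms_subset_indecomposables hj)
    have hyS : y ∈ Sstar S := hideal.nsmul_atoms_subset_sstar (Nat.succ_ne_zero n) hy
    obtain ⟨i, hij, hyi⟩ :=
      hS.exists_le_mem_nsmul_atoms_of_mem_nsmul_indecomposables hideal hyj hyS
    rw [succ_nsmul]
    exact Set.add_mem_add (ih hyi hy (hij.trans (Nat.le_of_lt_succ hjn))) hb

end IsGapAbsorbing

theorem statement14_general [RefinementAddMonoid M] (hS : IsGapAbsorbing S)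
    (hideal : IsIdealExtension S) (s : M) : (Lset S s).OrdConnected := by
  refine ⟨fun l hl l' hl' m hm => ?_⟩
  rw [mem_lset_iff] at hl hl' ⊢
  exact Nat.decreasingInduction' (P := fun n => s ∈ n • Atoms S)
    (fun n _ hmn hn => hS.mem_nsmul_atoms_of_mem_succ_nsmul hideal hl hn (hm.1.trans hmn)) hm.2 hl'

end Submonoid

theorem statement14 (I : Set ℕ) (hI : I.Nonempty) (S : AddSubmonoid (↥I →₀ ℕ))
    (hS : IsGapAbsorbing S) :
    ∀ s ∈ S, ∀ l ∈ Lset S s, ∀ l' ∈ Lset S s, ∀ m : ℕ,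
      l ≤ m → m ≤ l' → m ∈ Lset S s := by
  intro s _ l hl l' hl' m hlm hml'
  have hideal : IsIdealExtension S := hS.isIdealExtension fun _ => exists_mem_atoms_add_eq
  exact (statement14_general hS hideal s).out hl hl' ⟨hlm, hml'⟩
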